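/- Fix natural numbers g, n with 2g + n > 0 and (g, n) ≠ (0, 1). Then SRT_{g,n,2}, the set of isomorphism classes of stable rooted trees of type (g, n, 2), is a finite set of even cardinality. -/

import Mathlib

/-- A raw combinatorial rooted tree with genus labels and `n` labeled regular legs.
Vertices are `0, 1, …, numV − 1` with root `0`; `parent v < v` (for valid trees)
encodes the rooted tree structure; `genus v` is the genus label of vertex `v`;
`legAt i` is the vertex carrying the regular leg `i`.  The `m` frozen legs are
always attached to the root and enter only through the stability condition. -/
structure RawTree (n : ℕ) where
  numV : ℕ
  parent : ℕ → ℕ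
  genus : ℕ → ℕ
  legAt : Fin n → ℕ

namespace RawTree

variable {n : ℕ}

/-- The set of children of the vertex `v` (edge-ends at `v` directed away from
the root correspond to the children of `v`). -/
def children (T : RawTree n) (v : ℕ) : Finset ℕ :=
  (Finset.range T.numV).filter (fun w => T.parent w = v ∧ w ≠ v)

/-- The set of regular legs attached to the vertex `v`. -/
def legsAt (T : RawTree n) (v : ℕ) : Finset (Fin n) :=
  Finset.univ.filter (fun i => T.legAt i = v)

/-- `T` is a stable rooted tree of type `(g, n, m)`: it is a genuine rooted tree
with root `0`, all legs attached to actual vertices, total genus `g`, and every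
vertex `v` satisfies the stability condition `2 g(v) − 2 + |H(v)| > 0`, where
`|H(v)| = |children| + |regular legs at v| + (m if v is the root, else 1)`. -/
def IsSRT (g n m : ℕ) (T : RawTree n) : Prop :=
  0 < T.numV ∧
  T.parent 0 = 0 ∧
  (∀ v, 0 < v → v < T.numV → T.parent v < v) ∧
  (∀ i, T.legAt i < T.numV) ∧
  (∑ v ∈ Finset.range T.numV, T.genus v) = g ∧
  (∀ v, v < T.numV →
    2 < 2 * T.genus v +
      ((T.children v).card + (T.legsAt v).card + (if v = 0 then m else 1)))

/-- Isomorphism of raw trees: a bijection of the vertex sets preserving the root,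
the tree structure, the genus labels and the leg labels. -/
def Iso (T T' : RawTree n) : Prop :=
  ∃ σ : ℕ → ℕ,
    Set.BijOn σ (Set.Iio T.numV) (Set.Iio T'.numV) ∧
    σ 0 = 0 ∧
    (∀ v < T.numV, σ (T.parent v) = T'.parent (σ v)) ∧
    (∀ v < T.numV, T'.genus (σ v) = T.genus v) ∧
    (∀ i, σ (T.legAt i) = T'.legAt i)

/-- The root of `T` has genus `0` and its unique positive half-edge is an edge
(exactly one child and no regular legs at the root). -/
def RootContractible (T : RawTree n) : Prop :=
  T.genus 0 = 0 ∧ (T.children 0).card = 1 ∧ (T.legsAt 0).card = 0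

/-- The root of `T` satisfies `2 g(v_r) − 2 + |H_+(v_r)| ≥ 0`. -/
def RootStablePlus (T : RawTree n) : Prop :=
  2 ≤ 2 * T.genus 0 + ((T.children 0).card + (T.legsAt 0).card)

/-- Contraction of a tree whose root has genus `0` and a unique positive
half-edge which is an edge: delete the root and this edge, declare the unique
child (which is the vertex `1`) to be the new root, and reattach the frozen legs
to it. -/
def contract (T : RawTree n) : RawTree n where
  numV := T.numV - 1
  parent := fun v => T.parent (v + 1) - 1
  genus := fun v => T.genus (v + 1)
  legAt := fun i => T.legAt i - 1

end RawTree

/-- Representatives of stable rooted trees of type `(g, n, m)`. -/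
def SRTRep (g n m : ℕ) : Type :=
  {T : RawTree n // RawTree.IsSRT g n m T}

/-- The isomorphism relation on representatives. -/
def SRTRel (g n m : ℕ) (S S' : SRTRep g n m) : Prop :=
  RawTree.Iso S.1 S'.1

/-- `SRT g n m`: the set of isomorphism classes of stable rooted trees of type
`(g, n, m)`. -/
def SRT (g n m : ℕ) : Type :=
  Quot (SRTRel g n m)

/-!
Attaching a new genus `0` root below the old one (`expand`) and contracting the root edge
(`contract`) are mutually inverse on isomorphism classes. The new root carries its two frozen legs
and one edge, so it is stable for every `T`; the old root loses its two frozen legs and gains one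
edge, so it stays stable exactly when `RootStablePlus T`. For two frozen legs, stability of the root
says that `RootStablePlus T` fails only if the root has genus `0` and a single positive half-edge.
If that half-edge is an edge, `T` is itself contractible; if it is a leg, `T` is the one-vertex tree
of type `(0, 1, 2)`. Hence, outside that type, expanding the trees that are not contractible and
contracting those that are gives an involution without fixed points.
-/

theorem even_natCard_of_involutive {α : Type*} [Finite α] {f : α → α}
    (hf : Function.Involutive f) (hne : ∀ x, f x ≠ x) : Even (Nat.card α) := by
  classical
  have := Fintype.ofFinite α
  have support_eq : hf.toPerm.support = Finset.univ :=
    Finset.eq_univ_of_forall fun x => Equiv.Perm.mem_support.2 (hne x)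
  have sq_eq_one : hf.toPerm ^ 2 = 1 := by
    rw [sq]
    exact Equiv.ext hf
  rw [Nat.card_eq_fintype_card, ← Finset.card_univ, ← support_eq, even_iff_two_dvd]
  exact Equiv.Perm.two_dvd_card_support sq_eq_one

theorem bijOn_Iio_succ_iff {σ τ : ℕ → ℕ} {a b : ℕ} (h0 : σ 0 = 0)
    (hs : ∀ v < a, σ (v + 1) = τ v + 1) :
    Set.BijOn σ (Set.Iio (a + 1)) (Set.Iio (b + 1)) ↔ Set.BijOn τ (Set.Iio a) (Set.Iio b) := by
  refine and_congr ?_ (and_congr ?_ ?_)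
  · simp only [Set.MapsTo, Set.mem_Iio, Nat.forall_lt_succ_left', h0, Nat.succ_pos, true_and]
    exact forall₂_congr fun v hv => by rw [hs v hv, Nat.add_lt_add_iff_right]
  · simp only [Set.InjOn, Set.mem_Iio, Nat.forall_lt_succ_left', h0]
    simp +contextual [hs]
  · have exists_eq_succ_iff (y : ℕ) :
        (∃ x < a, σ (x + 1) = y + 1) ↔ ∃ x < a, τ x = y :=
      exists_congr fun x => and_congr_right fun hx => by rw [hs x hx, Nat.add_right_cancel_iff]
    simp only [Set.SurjOn, Set.subset_def, Set.mem_image, Set.mem_Iio, Nat.forall_lt_succ_left',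
      Nat.exists_lt_succ_left, exists_eq_succ_iff]
    simp [h0]

namespace RawTree

variable {g n m : ℕ} {T T' T'' : RawTree n}

theorem mem_children {v w : ℕ} :
    w ∈ T.children v ↔ w < T.numV ∧ T.parent w = v ∧ w ≠ v := by
  simp [children]

theorem mem_legsAt {v : ℕ} {i : Fin n} : i ∈ T.legsAt v ↔ T.legAt i = v := by
  simp [legsAt]

namespace IsSRT

theorem numV_pos (h : IsSRT g n m T) : 0 < T.numV := h.1

theorem parent_zero (h : IsSRT g n m T) : T.parent 0 = 0 := h.2.1

theorem parent_lt (h : IsSRT g n m T) {v : ℕ} (hv : 0 < v) (hvT : v < T.numV) :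
    T.parent v < v :=
  h.2.2.1 v hv hvT

theorem legAt_lt (h : IsSRT g n m T) (i : Fin n) : T.legAt i < T.numV := h.2.2.2.1 i

theorem sum_genus (h : IsSRT g n m T) : ∑ v ∈ Finset.range T.numV, T.genus v = g := h.2.2.2.2.1

theorem stable (h : IsSRT g n m T) {v : ℕ} (hv : v < T.numV) :
    2 < 2 * T.genus v +
      ((T.children v).card + (T.legsAt v).card + (if v = 0 then m else 1)) :=
  h.2.2.2.2.2 v hv

theorem parent_lt_numV (h : IsSRT g n m T) {v : ℕ} (hv : v < T.numV) : T.parent v < T.numV := by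
  rcases Nat.eq_zero_or_pos v with rfl | hpos
  · rw [h.parent_zero]
    exact hv
  · exact (h.parent_lt hpos hv).trans hv

theorem genus_le (h : IsSRT g n m T) {v : ℕ} (hv : v < T.numV) : T.genus v ≤ g := by
  rw [← h.sum_genus]
  exact Finset.single_le_sum (f := T.genus) (fun _ _ => Nat.zero_le _) (Finset.mem_range.2 hv)

theorem children_eq_filter (h : IsSRT g n m T) (v : ℕ) :
    T.children v = {w ∈ Finset.Ico 1 T.numV | T.parent w = v} := by
  ext w
  simp only [mem_children, Finset.mem_filter, Finset.mem_Ico]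
  rcases Nat.eq_zero_or_pos w with rfl | hw
  · have := h.parent_zero
    omega
  · have := h.parent_lt hw
    omega

theorem one_mem_children_zero (h : IsSRT g n m T) (hV : 1 < T.numV) : 1 ∈ T.children 0 := by
  have := h.parent_lt one_pos hV
  exact mem_children.2 ⟨hV, by omega, one_ne_zero⟩

theorem sum_card_children (h : IsSRT g n m T) :
    ∑ v ∈ Finset.range T.numV, (T.children v).card = T.numV - 1 := by
  have maps : Set.MapsTo T.parent (Finset.Ico 1 T.numV) (Finset.range T.numV) := fun w hw =>
    Finset.mem_coe.2 (Finset.mem_range.2 (h.parent_lt_numV (Finset.mem_Ico.1 hw).2))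
  simp only [h.children_eq_filter, ← Finset.card_eq_sum_card_fiberwise maps, Nat.card_Ico]

theorem sum_card_legsAt (h : IsSRT g n m T) :
    ∑ v ∈ Finset.range T.numV, (T.legsAt v).card = n := by
  have maps : Set.MapsTo T.legAt (Finset.univ : Finset (Fin n)) (Finset.range T.numV) :=
    fun i _ => Finset.mem_coe.2 (Finset.mem_range.2 (h.legAt_lt i))
  simp only [legsAt, ← Finset.card_eq_sum_card_fiberwise maps, Finset.card_fin]

theorem numV_add_two_le (h : IsSRT g n m T) : T.numV + 2 ≤ 2 * g + n + m := by
  have frozen_or_parent :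
      ∑ v ∈ Finset.range T.numV, (if v = 0 then m else 1) = T.numV - 1 + m := by
    obtain ⟨k, hk⟩ := Nat.exists_eq_succ_of_ne_zero h.numV_pos.ne'
    simp [hk, Finset.sum_range_succ']
  have total : ∑ _v ∈ Finset.range T.numV, 3 ≤ ∑ v ∈ Finset.range T.numV, (2 * T.genus v +
      ((T.children v).card + (T.legsAt v).card + (if v = 0 then m else 1))) :=
    Finset.sum_le_sum fun v hv => h.stable (Finset.mem_range.1 hv)
  simp only [Finset.sum_add_distrib, ← Finset.mul_sum, Finset.sum_const, Finset.card_range,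
    smul_eq_mul, h.sum_genus, h.sum_card_children, h.sum_card_legsAt, frozen_or_parent] at total
  have := h.numV_pos
  omega

end IsSRT

/-- Equality of raw trees up to the junk values of `parent` and `genus` outside the vertex set. -/
structure Agree (T T' : RawTree n) : Prop where
  numV_eq : T.numV = T'.numV
  parent_eq : ∀ v < T.numV, T.parent v = T'.parent v
  genus_eq : ∀ v < T.numV, T.genus v = T'.genus v
  legAt_eq : ∀ i, T.legAt i = T'.legAt i

namespace Agree

theorem symm (a : Agree T T') : Agree T' T where
  numV_eq := a.numV_eq.symm
  parent_eq v hv := (a.parent_eq v (a.numV_eq ▸ hv)).symm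
  genus_eq v hv := (a.genus_eq v (a.numV_eq ▸ hv)).symm
  legAt_eq i := (a.legAt_eq i).symm

theorem iso (a : Agree T T') : Iso T T' :=
  ⟨id, a.numV_eq ▸ Set.bijOn_id _, rfl, a.parent_eq, fun v hv => (a.genus_eq v hv).symm,
    a.legAt_eq⟩

theorem children_eq (a : Agree T T') (v : ℕ) : T.children v = T'.children v := by
  ext w
  simp only [mem_children, ← a.numV_eq]
  exact and_congr_right fun hw => by rw [a.parent_eq w hw]

theorem legsAt_eq (a : Agree T T') (v : ℕ) : T.legsAt v = T'.legsAt v := by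
  ext i
  simp only [mem_legsAt, a.legAt_eq]

theorem isSRT (a : Agree T T') (h : IsSRT g n m T) : IsSRT g n m T' := by
  refine ⟨a.numV_eq ▸ h.numV_pos, ?_, fun v hv hvT => ?_, fun i => ?_, ?_, fun v hvT => ?_⟩
  · rw [← a.parent_eq 0 h.numV_pos, h.parent_zero]
  · rw [← a.numV_eq] at hvT
    rw [← a.parent_eq v hvT]
    exact h.parent_lt hv hvT
  · rw [← a.numV_eq, ← a.legAt_eq]
    exact h.legAt_lt i
  · rw [← a.numV_eq, ← h.sum_genus]
    exact Finset.sum_congr rfl fun v hv => (a.genus_eq v (Finset.mem_range.1 hv)).symm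
  · rw [← a.numV_eq] at hvT
    rw [← a.genus_eq v hvT, ← a.children_eq, ← a.legsAt_eq]
    exact h.stable hvT

end Agree

namespace Iso

theorem trans (e : Iso T T') (e' : Iso T' T'') : Iso T T'' := by
  obtain ⟨σ, bij, root, parent, genus, legs⟩ := e
  obtain ⟨τ, bij', root', parent', genus', legs'⟩ := e'
  refine ⟨τ ∘ σ, bij'.comp bij, ?_, fun v hv => ?_, fun v hv => ?_, fun i => ?_⟩
  · simp only [Function.comp_apply, root, root']
  · simp only [Function.comp_apply, parent v hv, parent' (σ v) (bij.mapsTo hv)]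
  · simp only [Function.comp_apply, genus' (σ v) (bij.mapsTo hv), genus v hv]
  · simp only [Function.comp_apply, legs, legs']

theorem card_children_zero (h : IsSRT g n m T) (e : Iso T T') :
    (T.children 0).card = (T'.children 0).card := by
  obtain ⟨σ, bij, root, parent, -, -⟩ := e
  have eq_zero_iff : ∀ v < T.numV, (σ v = 0 ↔ v = 0) := fun v hv => by
    simpa only [root] using bij.injOn.eq_iff hv h.numV_pos
  refine Finset.card_bij (fun w _ => σ w) (fun w hw => ?_) (fun a ha b hb hab => ?_)
    (fun w hw => ?_)
  · obtain ⟨hwT, hw0, hne⟩ := mem_children.1 hw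
    refine mem_children.2 ⟨bij.mapsTo hwT, ?_, mt (eq_zero_iff w hwT).1 hne⟩
    rw [← parent w hwT, hw0, root]
  · exact bij.injOn (mem_children.1 ha).1 (mem_children.1 hb).1 hab
  · obtain ⟨hwT, hw0, hne⟩ := mem_children.1 hw
    obtain ⟨v, hv : v < T.numV, rfl⟩ := bij.surjOn hwT
    refine ⟨v, mem_children.2 ⟨hv, ?_, mt (eq_zero_iff v hv).2 hne⟩, rfl⟩
    rw [← eq_zero_iff _ (h.parent_lt_numV hv), parent v hv, hw0]

theorem legsAt_zero (h : IsSRT g n m T) (e : Iso T T') : T.legsAt 0 = T'.legsAt 0 := by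
  obtain ⟨σ, bij, root, -, -, legs⟩ := e
  ext i
  rw [mem_legsAt, mem_legsAt, ← legs, ← bij.injOn.eq_iff (h.legAt_lt i) h.numV_pos, root]

theorem genus_zero (h : IsSRT g n m T) (e : Iso T T') : T.genus 0 = T'.genus 0 := by
  obtain ⟨σ, -, root, -, genus, -⟩ := e
  rw [← genus 0 h.numV_pos, root]

theorem rootContractible_iff (h : IsSRT g n m T) (e : Iso T T') :
    RootContractible T ↔ RootContractible T' := by
  rw [RootContractible, RootContractible, e.genus_zero h, e.card_children_zero h, e.legsAt_zero h]

end Iso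

/-- The tree with a new root of genus `0`, whose only positive half-edge is an edge to the old root.
Each vertex `v` of `T` becomes `v + 1`, so that `expand` is inverse to `contract`. -/
def expand (T : RawTree n) : RawTree n where
  numV := T.numV + 1
  parent
    | 0 => 0
    | 1 => 0
    | v + 2 => T.parent (v + 1) + 1
  genus
    | 0 => 0
    | v + 1 => T.genus v
  legAt i := T.legAt i + 1

theorem children_expand_zero (hV : 0 < T.numV) : T.expand.children 0 = {1} := by
  ext (_ | _ | w)
  · simp [mem_children]
  · simp [mem_children, expand, hV]
  · simp [mem_children, expand]

theorem children_expand_succ (h0 : T.parent 0 = 0) (v : ℕ) :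
    T.expand.children (v + 1) = (T.children v).map (addRightEmbedding 1) := by
  ext (_ | _ | w)
  · simp [mem_children, expand]
  · simp [mem_children, expand, h0]
  · simp [mem_children, expand]

theorem legsAt_expand_zero : T.expand.legsAt 0 = ∅ := by
  ext i
  simp [mem_legsAt, expand]

theorem legsAt_expand_succ (v : ℕ) : T.expand.legsAt (v + 1) = T.legsAt v := by
  ext i
  simp [mem_legsAt, expand]

theorem rootContractible_expand (hV : 0 < T.numV) : T.expand.RootContractible := by
  rw [RootContractible, children_expand_zero hV, legsAt_expand_zero]
  exact ⟨rfl, rfl, rfl⟩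

theorem IsSRT.expand (hm : 2 ≤ m) (h : IsSRT g n m T) (hs : T.RootStablePlus) :
    IsSRT g n m T.expand := by
  refine ⟨Nat.succ_pos _, rfl, ?_, fun i => Nat.succ_lt_succ (h.legAt_lt i), ?_, ?_⟩
  · rintro (_ | _ | v) hv hvT
    · exact hv
    · exact Nat.one_pos
    · exact Nat.succ_lt_succ (h.parent_lt v.succ_pos (Nat.lt_of_succ_lt_succ hvT))
  · exact (Finset.sum_range_succ' _ _).trans h.sum_genus
  · rintro (_ | v) hvT
    · rw [children_expand_zero h.numV_pos, Finset.card_singleton, if_pos rfl]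
      omega
    · have stable := h.stable (Nat.lt_of_succ_lt_succ hvT)
      rw [children_expand_succ h.parent_zero, Finset.card_map, legsAt_expand_succ,
        if_neg v.succ_ne_zero]
      change 2 < 2 * T.genus v + _
      rcases Nat.eq_zero_or_pos v with rfl | hv
      · rw [RootStablePlus] at hs
        omega
      · rwa [if_neg hv.ne'] at stable

theorem IsSRT.of_expand (hm : 0 < m) (hV : 0 < T.numV) (h0 : T.parent 0 = 0)
    (h : IsSRT g n m T.expand) : IsSRT g n m T ∧ T.RootStablePlus := by
  have stable (v : ℕ) (hv : v < T.numV) :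
      2 < 2 * T.genus v + ((T.children v).card + (T.legsAt v).card + 1) := by
    have := h.stable (Nat.succ_lt_succ hv)
    rwa [children_expand_succ h0, Finset.card_map, legsAt_expand_succ,
      if_neg v.succ_ne_zero] at this
  refine ⟨⟨hV, h0, ?_, fun i => Nat.lt_of_succ_lt_succ (h.legAt_lt i), ?_, fun v hv => ?_⟩, ?_⟩
  · rintro (_ | v) hv hvT
    · exact absurd hv (lt_irrefl 0)
    · exact Nat.lt_of_succ_lt_succ (h.parent_lt (v + 1).succ_pos (Nat.succ_lt_succ hvT))
  · exact (Finset.sum_range_succ' _ _).symm.trans h.sum_genus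
  · have := stable v hv
    split_ifs <;> omega
  · have := stable 0 hV
    rw [RootStablePlus]
    omega

theorem expand_parent_succ {v : ℕ} (hv : 0 < v) : T.expand.parent (v + 1) = T.parent v + 1 := by
  obtain ⟨k, rfl⟩ := Nat.exists_eq_add_of_lt hv
  simp [expand]

theorem expand_parent_succ_sub_one (h0 : T.parent 0 = 0) (v : ℕ) :
    T.expand.parent (v + 1) - 1 = T.parent v := by
  rcases Nat.eq_zero_or_pos v with rfl | hv
  · exact h0.symm
  · rw [expand_parent_succ hv, Nat.add_sub_cancel]

theorem Iso.expand (e : Iso T T') : Iso T.expand T'.expand := by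
  obtain ⟨σ, bij, root, parent, genus, legs⟩ := e
  let shift : ℕ → ℕ
    | 0 => 0
    | v + 1 => σ v + 1
  have bij_shift : Set.BijOn shift (Set.Iio (T.numV + 1)) (Set.Iio (T'.numV + 1)) :=
    (bijOn_Iio_succ_iff (σ := shift) (τ := σ) rfl fun _ _ => rfl).2 bij
  refine ⟨shift, bij_shift, rfl, ?_, ?_, fun i => congrArg (· + 1) (legs i)⟩
  · rintro (_ | _ | v) hv
    · rfl
    · simp only [shift, RawTree.expand, root]
    · have hvT : v + 1 < T.numV := Nat.lt_of_succ_lt_succ hv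
      have pos : 0 < σ (v + 1) := Nat.pos_of_ne_zero fun hσ =>
        v.succ_ne_zero (bij.injOn hvT (v.succ_pos.trans hvT) (hσ.trans root.symm))
      exact (congrArg (· + 1) (parent _ hvT)).trans (expand_parent_succ pos).symm
  · rintro (_ | v) hv
    · rfl
    · exact genus v (Nat.lt_of_succ_lt_succ hv)

theorem Iso.of_expand (hV : 0 < T.numV) (h0 : T.parent 0 = 0) (h0' : T'.parent 0 = 0)
    (e : Iso T.expand T'.expand) : Iso T T' := by
  obtain ⟨σ, bij, root, parent, genus, legs⟩ := e
  have σ_succ : ∀ v < T.numV, σ (v + 1) = σ (v + 1) - 1 + 1 := fun v hv => by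
    have : σ (v + 1) ≠ 0 := fun hσ =>
      v.succ_ne_zero (bij.injOn (Nat.succ_lt_succ hv) (Nat.succ_pos _) (hσ.trans root.symm))
    omega
  -- The old root `1` is the only child of the new root, so `σ` fixes it.
  have σ_one : σ 1 = 1 := by
    have parent_σ_one : T'.expand.parent (σ 1) = 0 :=
      (parent 1 (Nat.succ_lt_succ hV)).symm.trans root
    rw [σ_succ 0 hV] at parent_σ_one ⊢
    by_contra hne
    rw [expand_parent_succ (by omega)] at parent_σ_one
    exact Nat.succ_ne_zero _ parent_σ_one
  refine ⟨fun v => σ (v + 1) - 1, (bijOn_Iio_succ_iff root σ_succ).1 bij, by simp [σ_one],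
    fun v hv => ?_, fun v hv => ?_, fun i => congrArg (· - 1) (legs i)⟩
  · rw [← expand_parent_succ_sub_one h0', ← σ_succ v hv, ← parent _ (Nat.succ_lt_succ hv)]
    rcases Nat.eq_zero_or_pos v with rfl | hpos
    · simp [RawTree.expand, h0, root, σ_one]
    · rw [expand_parent_succ hpos]
  · have := genus (v + 1) (Nat.succ_lt_succ hv)
    rwa [σ_succ v hv] at this

theorem contract_expand (h0 : T.parent 0 = 0) : T.expand.contract = T := by
  simp only [contract, expand_parent_succ_sub_one h0]
  rfl

namespace RootContractible

theorem one_lt_numV (hc : T.RootContractible) : 1 < T.numV := by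
  obtain ⟨v, hv⟩ := Finset.card_pos.1 (hc.2.1 ▸ Nat.one_pos)
  obtain ⟨hvT, -, hne⟩ := mem_children.1 hv
  omega

theorem parent_pos (h : IsSRT g n m T) (hc : T.RootContractible) {v : ℕ} (hv : 1 < v)
    (hvT : v < T.numV) : 0 < T.parent v := by
  by_contra! hp
  have mem_v : v ∈ T.children 0 := mem_children.2 ⟨hvT, by omega, by omega⟩
  have mem_one := h.one_mem_children_zero (hv.trans hvT)
  exact hv.ne (Finset.card_le_one.1 hc.2.1.le 1 mem_one v mem_v)

theorem legAt_pos (hc : T.RootContractible) (i : Fin n) : 0 < T.legAt i :=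
  Nat.pos_of_ne_zero fun hi =>
    Finset.notMem_empty i (Finset.card_eq_zero.1 hc.2.2 ▸ mem_legsAt.2 hi)

theorem agree_expand_contract (h : IsSRT g n m T) (hc : T.RootContractible) :
    Agree T.contract.expand T where
  numV_eq := Nat.sub_add_cancel h.numV_pos
  parent_eq := by
    rintro (_ | _ | v) hv
    · exact h.parent_zero.symm
    · exact (Nat.lt_one_iff.1 (h.parent_lt one_pos hc.one_lt_numV)).symm
    · have : v + 2 < T.numV := by
        simp only [contract, RawTree.expand] at hv
        omega
      exact Nat.sub_add_cancel (hc.parent_pos h (by omega) this)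
  genus_eq := by
    rintro (_ | v) -
    · exact hc.1.symm
    · rfl
  legAt_eq i := Nat.sub_add_cancel (hc.legAt_pos i)

theorem numV_contract_pos (hc : T.RootContractible) : 0 < T.contract.numV :=
  Nat.sub_pos_of_lt hc.one_lt_numV

theorem parent_contract_zero (h : IsSRT g n m T) (hc : T.RootContractible) :
    T.contract.parent 0 = 0 :=
  Nat.sub_eq_zero_of_le (h.parent_lt one_pos hc.one_lt_numV).le

end RootContractible

theorem IsSRT.contract (hm : 0 < m) (h : IsSRT g n m T) (hc : T.RootContractible) :
    IsSRT g n m T.contract ∧ T.contract.RootStablePlus :=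
  IsSRT.of_expand hm hc.numV_contract_pos (hc.parent_contract_zero h)
    ((hc.agree_expand_contract h).symm.isSRT h)

theorem Iso.contract (h : IsSRT g n m T) (h' : IsSRT g n m T') (hc : T.RootContractible)
    (e : Iso T T') : Iso T.contract T'.contract := by
  have hc' := (e.rootContractible_iff h).1 hc
  exact .of_expand hc.numV_contract_pos (hc.parent_contract_zero h) (hc'.parent_contract_zero h')
    ((hc.agree_expand_contract h).iso.trans (e.trans (hc'.agree_expand_contract h').symm.iso))

theorem RootStablePlus.not_rootContractible (hs : T.RootStablePlus) : ¬ T.RootContractible := by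
  rintro ⟨hg, hc, hl⟩
  rw [RootStablePlus] at hs
  omega

theorem rootStablePlus_of_not_rootContractible (hne : (g, n) ≠ (0, 1)) (h : IsSRT g n 2 T)
    (hc : ¬ T.RootContractible) : T.RootStablePlus := by
  by_contra hs
  have stable := h.stable h.numV_pos
  rw [if_pos rfl] at stable
  rw [RootStablePlus] at hs
  rw [RootContractible] at hc
  have no_children : T.children 0 = ∅ := Finset.card_eq_zero.1 (by omega)
  have numV_eq_one : T.numV = 1 := by
    by_contra hV
    have := h.one_mem_children_zero (by have := h.numV_pos; omega)
    exact Finset.notMem_empty 1 (no_children ▸ this)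
  have sum_genus := h.sum_genus
  have sum_card_legsAt := h.sum_card_legsAt
  rw [numV_eq_one, Finset.sum_range_one] at sum_genus sum_card_legsAt
  exact hne (Prod.ext (by dsimp only; omega) (by dsimp only; omega))

open Classical in
/-- The pairing of trees by contracting the root edge: `T` is contracted if this is possible, and
otherwise expanded, so that it is the contraction of its partner. -/
noncomputable def rootPartner (T : RawTree n) : RawTree n :=
  if T.RootContractible then T.contract else T.expand

theorem rootPartner_of_rootContractible (hc : T.RootContractible) : T.rootPartner = T.contract :=
  if_pos hc

theorem rootPartner_of_not_rootContractible (hc : ¬ T.RootContractible) :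
    T.rootPartner = T.expand :=
  if_neg hc

theorem IsSRT.rootPartner (hne : (g, n) ≠ (0, 1)) (h : IsSRT g n 2 T) :
    IsSRT g n 2 T.rootPartner := by
  by_cases hc : T.RootContractible
  · rw [rootPartner_of_rootContractible hc]
    exact (h.contract two_pos hc).1
  · rw [rootPartner_of_not_rootContractible hc]
    exact h.expand le_rfl (rootStablePlus_of_not_rootContractible hne h hc)

theorem Iso.rootPartner (h : IsSRT g n m T) (h' : IsSRT g n m T') (e : Iso T T') :
    Iso T.rootPartner T'.rootPartner := by
  have hiff := e.rootContractible_iff h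
  by_cases hc : T.RootContractible
  · rw [rootPartner_of_rootContractible hc, rootPartner_of_rootContractible (hiff.1 hc)]
    exact e.contract h h' hc
  · rw [rootPartner_of_not_rootContractible hc,
      rootPartner_of_not_rootContractible (mt hiff.2 hc)]
    exact e.expand

theorem rootContractible_rootPartner_iff (hm : 0 < m) (h : IsSRT g n m T) :
    T.rootPartner.RootContractible ↔ ¬ T.RootContractible := by
  by_cases hc : T.RootContractible
  · rw [rootPartner_of_rootContractible hc]
    exact iff_of_false (h.contract hm hc).2.not_rootContractible (not_not.2 hc)
  · rw [rootPartner_of_not_rootContractible hc]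
    exact iff_of_true (rootContractible_expand h.numV_pos) hc

theorem agree_rootPartner_rootPartner (hm : 0 < m) (h : IsSRT g n m T) :
    Agree T.rootPartner.rootPartner T := by
  have hiff := rootContractible_rootPartner_iff hm h
  by_cases hc : T.RootContractible
  · rw [rootPartner_of_not_rootContractible (mt hiff.1 (not_not.2 hc)),
      rootPartner_of_rootContractible hc]
    exact hc.agree_expand_contract h
  · rw [rootPartner_of_rootContractible (hiff.2 hc), rootPartner_of_not_rootContractible hc,
      contract_expand h.parent_zero]
    exact ⟨rfl, fun _ _ => rfl, fun _ _ => rfl, fun _ => rfl⟩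

/-- The data of a tree with at most `N` vertices, up to `Agree`, as a finite tuple of natural
numbers; the positions past the last vertex are filled with `0`. -/
def code (N : ℕ) (T : RawTree n) : ℕ × (Fin N → ℕ × ℕ) × (Fin n → ℕ) :=
  (T.numV, fun v => if v < T.numV then (T.parent v, T.genus v) else 0, T.legAt)

theorem agree_of_code_eq {N : ℕ} (hN : T.numV ≤ N) (h : T.code N = T'.code N) : Agree T T' := by
  simp only [code, Prod.mk.injEq] at h
  obtain ⟨numV_eq, vertices_eq, legAt_eq⟩ := h
  have data_eq : ∀ v < T.numV, (T.parent v, T.genus v) = (T'.parent v, T'.genus v) :=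
    fun v hv => by
      simpa only [← numV_eq, if_pos hv] using congrFun vertices_eq ⟨v, hv.trans_le hN⟩
  exact ⟨numV_eq, fun v hv => congrArg Prod.fst (data_eq v hv),
    fun v hv => congrArg Prod.snd (data_eq v hv), congrFun legAt_eq⟩

theorem IsSRT.code_le {N : ℕ} (hN : T.numV ≤ N) (h : IsSRT g n m T) :
    T.code N ≤ (N, fun _ => (N, g), fun _ => N) := by
  refine ⟨hN, fun v => ?_, fun i => (h.legAt_lt i).le.trans hN⟩
  simp only [code]
  split_ifs with hv
  · exact ⟨(h.parent_lt_numV hv).le.trans hN, h.genus_le hv⟩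
  · exact zero_le

end RawTree

namespace SRT

variable {g n m : ℕ}

instance : Finite (SRT g n m) := by
  classical
  let N := 2 * g + n + m
  have numV_le (T : SRTRep g n m) : T.1.numV ≤ N := by
    have := T.2.numV_add_two_le
    omega
  let encode (q : SRT g n m) : Set.Iic (N, (fun _ : Fin N => (N, g)), fun _ : Fin n => N) :=
    ⟨q.out.1.code N, q.out.2.code_le (numV_le q.out)⟩
  refine Finite.of_injective encode fun q q' hq => ?_
  rw [← Quot.out_eq q, ← Quot.out_eq q']
  exact Quot.sound (RawTree.agree_of_code_eq (numV_le q.out) (congrArg Subtype.val hq)).iso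

/-- The property that the trees of an isomorphism class have a contractible root edge. -/
def RootContractible (q : SRT g n m) : Prop :=
  Quot.lift (fun T : SRTRep g n m => T.1.RootContractible)
    (fun T _ e => propext (RawTree.Iso.rootContractible_iff T.2 e)) q

/-- The involution on isomorphism classes of type `(g, n, 2)` induced by `RawTree.rootPartner`. -/
noncomputable def rootPartner (hne : (g, n) ≠ (0, 1)) : SRT g n 2 → SRT g n 2 :=
  Quot.map (fun T => ⟨T.1.rootPartner, T.2.rootPartner hne⟩) fun T T' e => e.rootPartner T.2 T'.2

theorem rootPartner_involutive (hne : (g, n) ≠ (0, 1)) :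
    Function.Involutive (rootPartner hne) :=
  Quot.ind fun T => Quot.sound (RawTree.agree_rootPartner_rootPartner two_pos T.2).iso

theorem rootPartner_ne (hne : (g, n) ≠ (0, 1)) (q : SRT g n 2) : rootPartner hne q ≠ q := by
  have toggles : (rootPartner hne q).RootContractible ↔ ¬ q.RootContractible := by
    induction q using Quot.ind with
    | mk T => exact RawTree.rootContractible_rootPartner_iff two_pos T.2
  intro hq
  rw [hq] at toggles
  exact iff_not_self toggles

end SRT

/-- For `g, n` with `2g + n > 0` and `(g, n) ≠ (0, 1)`, the set `SRT_{g,n,2}` of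
isomorphism classes of stable rooted trees of type `(g, n, 2)` is a finite set
of even cardinality. -/
theorem srt_two_frozen_finite_even (g n : ℕ) (h : 0 < 2 * g + n)
    (hne : (g, n) ≠ ((0 : ℕ), (1 : ℕ))) :
    Finite (SRT g n 2) ∧ Even (Nat.card (SRT g n 2)) :=
  ⟨inferInstance,
    even_natCard_of_involutive (SRT.rootPartner_involutive hne) (SRT.rootPartner_ne hne)⟩
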